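/- arXiv:2208.13529 — 7 statements merged into one kernel-verified Lean document; each statement's English description precedes it below -/
import Mathlib

section
/- Let k ≥ 4 be an integer, p ≥ 2, and let u, v : ℝ² → ℝ be measurable functions satisfying u(R_k x) = u(x) and v(R_k x) = v(x) for all x ∈ ℝ². Then ∬_{ℝ²×ℝ²} ln(1+|x−y|) |u(x)|^p |v(y)|^p dx dy ≥ (1/k²) (∫_{ℝ²} ln(1+|x|)|u(x)|^p dx) (∫_{ℝ²} |v(y)|^p dy), where all integrals are taken in [0,∞]. -/
/-!
The orbit `y, R y, …, R^(k-1) y` of the rotation `R = Rot k` sums to zero, since the sum is fixed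
by `R` and `R` has no nonzero fixed vector. Hence for every `x` the inner products `⟪x, R^j y⟫`
sum to zero, so one of them is nonpositive, and for that `j` one has `‖x‖ ≤ ‖x - R^j y‖`
(`exists_norm_le`). Consequently `log (1 + ‖x‖) ≤ ∑ j < k, log (1 + ‖x - R^j y‖)`.

As `R` preserves Lebesgue measure and `v` is `R`-invariant, the integral over `y` of
`log (1 + ‖x - y‖) |v y|^p` is unchanged when `y` is replaced by `R^j y` in the logarithm. Summing
over `j` gives the inequality with the better constant `1 / k`, and `1 / k² ≤ 1 / k`.
-/

noncomputable section

open MeasureTheory Real ENNReal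

abbrev R2 : Type := EuclideanSpace ℝ (Fin 2)

def Rot (k : ℕ) (x : R2) : R2 :=
  (WithLp.equiv 2 (Fin 2 → ℝ)).symm
    ![Real.cos (2*π/k) * x 0 - Real.sin (2*π/k) * x 1,
      Real.sin (2*π/k) * x 0 + Real.cos (2*π/k) * x 1]

lemma Rot_zero (k : ℕ) (x : R2) :
    Rot k x 0 = Real.cos (2*π/k) * x 0 - Real.sin (2*π/k) * x 1 := rfl

lemma Rot_one (k : ℕ) (x : R2) :
    Rot k x 1 = Real.sin (2*π/k) * x 0 + Real.cos (2*π/k) * x 1 := rfl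

/-- `Rot k` as a linear isometry. -/
def RotIso (k : ℕ) : R2 →ₗᵢ[ℝ] R2 where
  toFun := Rot k
  map_add' x y := by
    ext i
    fin_cases i
    · simp only [Fin.zero_eta, PiLp.add_apply, Rot_zero]; ring
    · simp only [Fin.mk_one, PiLp.add_apply, Rot_one]; ring
  map_smul' c x := by
    ext i
    fin_cases i
    · simp only [Fin.zero_eta, PiLp.smul_apply, Rot_zero, smul_eq_mul, RingHom.id_apply]; ring
    · simp only [Fin.mk_one, PiLp.smul_apply, Rot_one, smul_eq_mul, RingHom.id_apply]; ring
  norm_map' x := by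
    change ‖Rot k x‖ = ‖x‖
    rw [EuclideanSpace.norm_eq, EuclideanSpace.norm_eq]
    congr 1
    simp only [Fin.sum_univ_two, Rot_zero, Rot_one, Real.norm_eq_abs, sq_abs]
    linear_combination (x 0 ^ 2 + x 1 ^ 2) * Real.sin_sq_add_cos_sq (2*π/k)

lemma measurePreserving_Rot (k : ℕ) : MeasurePreserving (Rot k) :=
  ((RotIso k).toLinearIsometryEquiv rfl).measurePreserving

lemma Rot_iterate (k j : ℕ) (x : R2) :
    (Rot k)^[j] x 0 = Real.cos (j * (2*π/k)) * x 0 - Real.sin (j * (2*π/k)) * x 1 ∧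
    (Rot k)^[j] x 1 = Real.sin (j * (2*π/k)) * x 0 + Real.cos (j * (2*π/k)) * x 1 := by
  induction j with
  | zero => simp
  | succ j ih =>
    rw [Function.iterate_succ_apply', Rot_zero, Rot_one, ih.1, ih.2]
    push_cast
    rw [add_mul, one_mul, Real.cos_add, Real.sin_add]
    constructor <;> ring

lemma Rot_iterate_self (k : ℕ) (hk : 4 ≤ k) (x : R2) : (Rot k)^[k] x = x := by
  have hk0 : (k : ℝ) ≠ 0 := by positivity
  have h := Rot_iterate k k x
  rw [mul_div_cancel₀ _ hk0, Real.cos_two_pi, Real.sin_two_pi] at h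
  ext i
  fin_cases i
  · simpa using h.1
  · simpa using h.2

lemma eq_zero_of_Rot_eq (k : ℕ) (hk : 4 ≤ k) (x : R2) (hx : Rot k x = x) : x = 0 := by
  have hk4 : (4 : ℝ) ≤ k := by exact_mod_cast hk
  have hc : Real.cos (2*π/k) < 1 := by
    refine lt_of_le_of_ne (Real.cos_le_one _) fun h => ?_
    have hpos : 0 < 2*π/k := by positivity
    have hlt : 2*π/k < 2*π := div_lt_self (by positivity) (by linarith)
    rw [Real.cos_eq_one_iff_of_lt_of_lt (by linarith) hlt] at h
    exact hpos.ne' h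
  have h0 := Rot_zero k x
  have h1 := Rot_one k x
  rw [hx] at h0 h1
  have hsc := Real.sin_sq_add_cos_sq (2*π/k)
  set c := Real.cos (2*π/k)
  set s := Real.sin (2*π/k)
  -- `2 * (1 - c)` is the determinant of `1 - R`.
  have hne : (2 * (1 - c)) ≠ 0 := by
    have : 0 < 2 * (1 - c) := by linarith
    exact this.ne'
  have e0 : 2 * (1 - c) * x 0 = 0 := by
    linear_combination (1 - c) * h0 - s * h1 - x 0 * hsc
  have e1 : 2 * (1 - c) * x 1 = 0 := by
    linear_combination (1 - c) * h1 + s * h0 - x 1 * hsc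
  ext i
  fin_cases i
  · simpa using (mul_eq_zero.mp e0).resolve_left hne
  · simpa using (mul_eq_zero.mp e1).resolve_left hne

lemma sum_Rot_iterate (k : ℕ) (hk : 4 ≤ k) (y : R2) :
    ∑ j ∈ Finset.range k, (Rot k)^[j] y = 0 := by
  apply eq_zero_of_Rot_eq k hk
  change RotIso k (∑ j ∈ Finset.range k, (Rot k)^[j] y) = _
  rw [map_sum]
  have h : ∀ j, RotIso k ((Rot k)^[j] y) = (Rot k)^[j + 1] y := fun j =>
    (Function.iterate_succ_apply' (Rot k) j y).symm
  simp only [h]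
  have h1 := Finset.sum_range_succ (fun j => (Rot k)^[j] y) k
  have h2 := Finset.sum_range_succ' (fun j => (Rot k)^[j] y) k
  rw [h1, Rot_iterate_self k hk] at h2
  exact (add_right_cancel h2).symm

/-- Some point of the orbit of `y` lies in the half-plane `⟪x, ·⟫ ≤ 0`, hence is at distance at
least `‖x‖` from `x`. -/
lemma exists_norm_le (k : ℕ) (hk : 4 ≤ k) (x y : R2) :
    ∃ j ∈ Finset.range k, ‖x‖ ≤ ‖x - (Rot k)^[j] y‖ := by
  have hs : ∑ j ∈ Finset.range k, inner ℝ x ((Rot k)^[j] y) ≤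
      ∑ j ∈ Finset.range k, (0 : ℝ) := by
    rw [← inner_sum, sum_Rot_iterate k hk]
    simp
  obtain ⟨j, hj, hle⟩ := Finset.exists_le_of_sum_le ⟨0, by simp; omega⟩ hs
  refine ⟨j, hj, ?_⟩
  have h := norm_sub_sq_real x ((Rot k)^[j] y)
  refine le_of_sq_le_sq ?_ (norm_nonneg _)
  nlinarith [sq_nonneg ‖(Rot k)^[j] y‖]

lemma log_le_sum (k : ℕ) (hk : 4 ≤ k) (x y : R2) :
    ENNReal.ofReal (Real.log (1 + ‖x‖)) ≤
      ∑ j ∈ Finset.range k, ENNReal.ofReal (Real.log (1 + ‖x - (Rot k)^[j] y‖)) := by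
  obtain ⟨j, hj, hle⟩ := exists_norm_le k hk x y
  refine le_trans ?_ (Finset.single_le_sum
    (f := fun j => ENNReal.ofReal (Real.log (1 + ‖x - (Rot k)^[j] y‖)))
    (fun _ _ => zero_le) hj)
  gcongr

theorem statement8 (k : ℕ) (hk : 4 ≤ k) (p : ℝ) (hp : 2 ≤ p)
    (u v : R2 → ℝ) (hu : Measurable u) (hv : Measurable v)
    (huk : ∀ x, u (Rot k x) = u x) (hvk : ∀ x, v (Rot k x) = v x) :
    (1 / (k : ℝ≥0∞)^2) * (∫⁻ x, ENNReal.ofReal (Real.log (1 + ‖x‖) * |u x| ^ p)) *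
        (∫⁻ y, ENNReal.ofReal (|v y| ^ p)) ≤
      ∫⁻ x, ∫⁻ y, ENNReal.ofReal (Real.log (1 + ‖x - y‖)) *
        ENNReal.ofReal (|u x| ^ p) * ENNReal.ofReal (|v y| ^ p) := by
  have hvj : ∀ j y, v ((Rot k)^[j] y) = v y := by
    intro j
    induction j with
    | zero => simp
    | succ j ih => intro y; rw [Function.iterate_succ_apply', hvk, ih]
  have hinner : ∀ x, ENNReal.ofReal (Real.log (1 + ‖x‖) * |u x| ^ p) *
      (∫⁻ y, ENNReal.ofReal (|v y| ^ p)) ≤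
      k * ∫⁻ y, ENNReal.ofReal (Real.log (1 + ‖x - y‖)) *
        ENNReal.ofReal (|u x| ^ p) * ENNReal.ofReal (|v y| ^ p) := by
    intro x
    have hR : ∀ j, Measurable (Rot k)^[j] := fun j => (measurePreserving_Rot k).measurable.iterate j
    have hF : Measurable fun y => ENNReal.ofReal (Real.log (1 + ‖x - y‖)) *
        ENNReal.ofReal (|u x| ^ p) * ENNReal.ofReal (|v y| ^ p) := by fun_prop
    have hj : ∀ j, ∫⁻ y, ENNReal.ofReal (Real.log (1 + ‖x - y‖)) *
        ENNReal.ofReal (|u x| ^ p) * ENNReal.ofReal (|v y| ^ p) =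
        ∫⁻ y, ENNReal.ofReal (Real.log (1 + ‖x - (Rot k)^[j] y‖)) *
        ENNReal.ofReal (|u x| ^ p) * ENNReal.ofReal (|v y| ^ p) := by
      intro j
      rw [← ((measurePreserving_Rot k).iterate j).lintegral_comp hF]
      simp only [hvj]
    have hsum : (k : ℝ≥0∞) * ∫⁻ y, ENNReal.ofReal (Real.log (1 + ‖x - y‖)) *
        ENNReal.ofReal (|u x| ^ p) * ENNReal.ofReal (|v y| ^ p) =
        ∑ j ∈ Finset.range k, ∫⁻ y, ENNReal.ofReal (Real.log (1 + ‖x - (Rot k)^[j] y‖)) *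
        ENNReal.ofReal (|u x| ^ p) * ENNReal.ofReal (|v y| ^ p) := by
      rw [← Finset.sum_congr rfl fun j _ => hj j]
      simp
    rw [hsum, ← lintegral_finsetSum, ← lintegral_const_mul]
    · refine lintegral_mono fun y => ?_
      dsimp only
      rw [← Finset.sum_mul, ← Finset.sum_mul,
        ENNReal.ofReal_mul (Real.log_nonneg (by linarith [norm_nonneg x]))]
      gcongr
      exact log_le_sum k hk x y
    · fun_prop
    · intro j _
      have := hR j
      fun_prop
  have hk0 : (k : ℝ≥0∞) ≠ 0 := by
    have : k ≠ 0 := by omega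
    exact_mod_cast this
  have hk1 : (1 : ℝ≥0∞) ≤ k := by
    have : 1 ≤ k := by omega
    exact_mod_cast this
  have hkt : (k : ℝ≥0∞) ≠ ∞ := ENNReal.natCast_ne_top k
  have hmain : (∫⁻ x, ENNReal.ofReal (Real.log (1 + ‖x‖) * |u x| ^ p)) *
      (∫⁻ y, ENNReal.ofReal (|v y| ^ p)) ≤
      k * ∫⁻ x, ∫⁻ y, ENNReal.ofReal (Real.log (1 + ‖x - y‖)) *
        ENNReal.ofReal (|u x| ^ p) * ENNReal.ofReal (|v y| ^ p) := by
    rw [← lintegral_mul_const _ (by fun_prop), ← lintegral_const_mul' _ _ hkt]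
    exact lintegral_mono hinner
  rw [mul_assoc, one_div]
  calc _ ≤ (k : ℝ≥0∞)⁻¹ * _ := by
        gcongr
        exact le_self_pow₀ hk1 two_ne_zero
    _ = _ := ENNReal.inv_mul_cancel_left hk0 hkt
end
end

section
/- Let Y be a real Banach space and let I : Y → ℝ be continuously Fréchet differentiable with I(0) = 0. Let S ⊆ Y be a closed set and let Y₁, Y₂ ⊆ Y be disjoint open sets with Y₁ ∪ Y₂ = Y \ S, 0 ∈ Y₁, and suppose: (i) there exists α > 0 with I(u) ≥ α for all u ∈ S; (ii) there exists e ∈ Y₂ with I(e) ≤ 0. Set Γ := {γ ∈ C([0,1], Y) : γ(0) = 0, γ(1) = e} and c := inf_{γ∈Γ} max_{t∈[0,1]} I(γ(t)). Then c ≥ α > 0 and there exists a Cerami sequence at level c, i.e. a sequence (u_n) in Y with I(u_n) → c and ‖I'(u_n)‖_{Y*}(1 + ‖u_n‖_Y) → 0 as n → ∞. -/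
/-!
Every path from `0` to `e` meets `S`, because its range is connected and `Y₁`, `Y₂` are disjoint
open sets; hence `α ≤ c`.

The Cerami sequence comes from Ekeland's variational principle (`ekeland`) on the space of paths,
equipped with a metric adapted to the weight `1 + ‖u‖`. The map
`compress x = (log (1 + ‖x‖), x / (1 + ‖x‖))` embeds `Y` as a closed subset of `ℝ × Y`, with left
inverse `expand (s, z) = exp s • z`, and it moves by at most `2h` when `x` moves by
`h * (1 + ‖x‖)` (`dist_compress_le`). Paths are compared by the sup distance of their images under
`compress`; this makes the set of admissible paths complete (`pathSet`).

At an almost minimal path `γ` given by Ekeland's principle with constant `ε`, some maximum point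
`t` of `J ∘ γ` satisfies `‖J' (γ t)‖ * (1 + ‖γ t‖) ≤ 2 * ε`. Otherwise a partition of unity yields
a continuous field `v` along `γ`, vanishing at the endpoints, with `‖v t‖ < 1 + ‖γ t‖` and
`J' (γ t) (v t) < -2 * ε` at all maximum points (`exists_descent_field`). Ekeland's inequality for
the paths `γ + h • v` and the mean value theorem, in the limit `h → 0`, give a maximum point where
`J' (γ t) (v t) ≥ -2 * ε` (`exists_slope_ge`), a contradiction.
-/

noncomputable section

open MeasureTheory Filter Topology

/-- A weak form of Ekeland's variational principle. -/
lemma ekeland {X : Type*} [MetricSpace X] [CompleteSpace X] (f : X → ℝ) (hf : Continuous f)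
    (m : ℝ) (hm : ∀ x, m ≤ f x) (ε : ℝ) (hε : 0 < ε) (x₀ : X) :
    ∃ x, f x ≤ f x₀ ∧ ∀ y, f x ≤ f y + ε * dist x y := by
  have step : ∀ (n : ℕ) (x : X), ∃ y, f y + ε * dist x y ≤ f x ∧
      ∀ z, f z + ε * dist x z ≤ f x → f y ≤ f z + 1 / ((n : ℝ) + 1) := by
    intro n x
    have hne : (f '' {z | f z + ε * dist x z ≤ f x}).Nonempty :=
      ⟨f x, x, by simp, rfl⟩
    have hbd : BddBelow (f '' {z | f z + ε * dist x z ≤ f x}) :=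
      ⟨m, by rintro _ ⟨z, -, rfl⟩; exact hm z⟩
    have hpos : (0 : ℝ) < 1 / ((n : ℝ) + 1) := by positivity
    obtain ⟨_, ⟨y, hy, rfl⟩, hlt⟩ := exists_lt_of_csInf_lt hne
      (lt_add_of_pos_right (sInf (f '' {z | f z + ε * dist x z ≤ f x})) hpos)
    refine ⟨y, hy, fun z hz => ?_⟩
    have := csInf_le hbd ⟨z, hz, rfl⟩
    linarith
  choose g hg1 hg2 using step
  let x : ℕ → X := fun n => Nat.rec x₀ (fun n y => g n y) n
  have hx1 : ∀ n, f (x (n + 1)) + ε * dist (x n) (x (n + 1)) ≤ f (x n) := fun n => hg1 n (x n)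
  have hx2 : ∀ n z, f z + ε * dist (x n) z ≤ f (x n) → f (x (n + 1)) ≤ f z + 1 / ((n : ℝ) + 1) :=
    fun n => hg2 n (x n)
  have hmono : ∀ n k, f (x (n + k)) + ε * dist (x n) (x (n + k)) ≤ f (x n) := by
    intro n k
    induction k with
    | zero => simp
    | succ k ih =>
      have h1 := hx1 (n + k)
      have h2 := mul_le_mul_of_nonneg_left (dist_triangle (x n) (x (n + k)) (x (n + k + 1))) hε.le
      rw [← add_assoc]
      linarith
  have hanti : Antitone (fun n => f (x n)) := antitone_nat_of_succ_le fun n => by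
    have := hx1 n
    have := mul_nonneg hε.le (dist_nonneg (x := x n) (y := x (n + 1)))
    linarith
  have hbdd : BddBelow (Set.range fun n => f (x n)) :=
    ⟨m, by rintro _ ⟨n, rfl⟩; exact hm _⟩
  have hlim := tendsto_atTop_ciInf hanti hbdd
  set l := ⨅ n, f (x n) with hl
  have hl_le : ∀ n, l ≤ f (x n) := fun n => ciInf_le hbdd n
  have hcauchy : CauchySeq x := by
    refine cauchySeq_of_le_tendsto_0 (fun n => 2 * ((f (x n) - l) / ε)) ?_ ?_
    · intro a b N ha hb
      have key : ∀ k, N ≤ k → dist (x N) (x k) ≤ (f (x N) - l) / ε := by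
        intro k hk
        obtain ⟨j, rfl⟩ := Nat.exists_eq_add_of_le hk
        rw [le_div_iff₀ hε]
        have := hmono N j
        have := hl_le (N + j)
        linarith
      have h1 := key a ha
      have h2 := key b hb
      have := dist_triangle_left (x a) (x b) (x N)
      linarith
    · have := ((hlim.sub_const l).div_const ε).const_mul 2
      simpa using this
  obtain ⟨y, hy⟩ := cauchySeq_tendsto_of_complete hcauchy
  have hfy : f y = l := tendsto_nhds_unique ((hf.tendsto y).comp hy) hlim
  have hyS : ∀ n, f y + ε * dist (x n) y ≤ f (x n) := by
    intro n
    have hsh : Tendsto (fun k => x (n + k)) atTop (𝓝 y) := by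
      simpa only [add_comm n] using (tendsto_add_atTop_iff_nat n).2 hy
    exact le_of_tendsto (((hf.tendsto y).comp hsh).add
      ((tendsto_const_nhds.dist hsh).const_mul ε)) (Eventually.of_forall (hmono n))
  refine ⟨y, ?_, fun z => ?_⟩
  · rw [hfy]
    exact hl_le 0
  · by_contra! hz
    have hz' : ∀ n, f (x (n + 1)) ≤ f z + 1 / ((n : ℝ) + 1) := by
      intro n
      apply hx2
      have h1 := mul_le_mul_of_nonneg_left (dist_triangle (x n) y z) hε.le
      have h2 := hyS n
      linarith
    have hlz : l ≤ f z + 0 :=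
      le_of_tendsto_of_tendsto' ((tendsto_add_atTop_iff_nat 1).2 hlim)
        (tendsto_const_nhds.add tendsto_one_div_add_atTop_nhds_zero_nat) hz'
    have := mul_nonneg hε.le (dist_nonneg (x := y) (y := z))
    linarith

/-! ### A complete metric adapted to the Cerami weight -/

section Compress

variable {Y : Type*} [NormedAddCommGroup Y] [NormedSpace ℝ Y]

/-- The embedding of `Y` in `ℝ × Y` whose local Lipschitz constant at `x` is of order
`1 / (1 + ‖x‖)`. The first coordinate keeps the pulled-back metric complete at infinity. -/
def compress (x : Y) : ℝ × Y := (Real.log (1 + ‖x‖), (1 + ‖x‖)⁻¹ • x)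

/-- The left inverse of `compress`. -/
def expand (q : ℝ × Y) : Y := Real.exp q.1 • q.2

lemma expand_compress (x : Y) : expand (compress x) = x := by
  have h : 0 < 1 + ‖x‖ := by positivity
  simp only [expand, compress, Real.exp_log h, smul_smul, mul_inv_cancel₀ h.ne', one_smul]

lemma continuous_compress : Continuous (compress : Y → ℝ × Y) := by
  have h : ∀ x : Y, 1 + ‖x‖ ≠ 0 := fun x => by positivity
  have hc : Continuous fun x : Y => 1 + ‖x‖ := by fun_prop
  exact (hc.log h).prodMk ((hc.inv₀ h).smul continuous_id)

lemma continuous_expand : Continuous (expand : ℝ × Y → Y) := by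
  unfold expand
  fun_prop

lemma dist_compress_le (x y : Y) (h : ℝ) (hh : 0 ≤ h) (hh2 : h ≤ 1 / 2)
    (hxy : ‖y - x‖ ≤ h * (1 + ‖x‖)) : dist (compress x) (compress y) ≤ 2 * h := by
  have ha : 0 < 1 + ‖x‖ := by positivity
  have hb : 0 < 1 + ‖y‖ := by positivity
  have hn := abs_norm_sub_norm_le y x
  have hab : |‖y‖ - ‖x‖| ≤ h * (1 + ‖x‖) := hn.trans hxy
  obtain ⟨hab1, hab2⟩ := abs_le.1 hab
  have hlow : (1 + ‖x‖) / 2 ≤ 1 + ‖y‖ := by nlinarith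
  rw [Prod.dist_eq]
  refine max_le ?_ ?_
  · -- `log r ≤ r - 1` is applied to both quotients of `1 + ‖x‖` and `1 + ‖y‖`.
    simp only [compress, Real.dist_eq]
    have h1 := Real.log_le_sub_one_of_pos (div_pos ha hb)
    have h2 := Real.log_le_sub_one_of_pos (div_pos hb ha)
    rw [Real.log_div ha.ne' hb.ne', div_sub_one hb.ne'] at h1
    rw [Real.log_div hb.ne' ha.ne', div_sub_one ha.ne'] at h2
    have h3 : (1 + ‖x‖ - (1 + ‖y‖)) / (1 + ‖y‖) ≤ 2 * h := by
      rw [div_le_iff₀ hb]; nlinarith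
    have h4 : (1 + ‖y‖ - (1 + ‖x‖)) / (1 + ‖x‖) ≤ 2 * h := by
      rw [div_le_iff₀ ha]; nlinarith
    rw [abs_le]
    constructor <;> linarith
  · simp only [compress]
    rw [dist_comm, dist_eq_norm]
    have hid : (1 + ‖y‖)⁻¹ • y - (1 + ‖x‖)⁻¹ • x
        = (1 + ‖x‖)⁻¹ • (y - x) + ((1 + ‖y‖)⁻¹ - (1 + ‖x‖)⁻¹) • y := by
      module
    have h1 : ‖(1 + ‖x‖)⁻¹ • (y - x)‖ ≤ h := by
      rw [norm_smul, norm_inv, Real.norm_of_nonneg ha.le, inv_mul_le_iff₀ ha]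
      linarith
    have h2 : ‖((1 + ‖y‖)⁻¹ - (1 + ‖x‖)⁻¹) • y‖ ≤ h := by
      rw [norm_smul, inv_sub_inv hb.ne' ha.ne', norm_div, Real.norm_eq_abs, Real.norm_eq_abs,
        abs_of_pos (mul_pos hb ha), div_mul_eq_mul_div, div_le_iff₀ (mul_pos hb ha)]
      have h3 : |1 + ‖x‖ - (1 + ‖y‖)| ≤ h * (1 + ‖x‖) := by
        rw [abs_le]; constructor <;> linarith
      calc |1 + ‖x‖ - (1 + ‖y‖)| * ‖y‖ ≤ h * (1 + ‖x‖) * (1 + ‖y‖) := by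
            gcongr
            linarith
        _ = h * ((1 + ‖y‖) * (1 + ‖x‖)) := by ring
    rw [hid]
    exact (norm_add_le _ _).trans (by linarith)

/-- The images under `compress` of the paths from `0` to `e`. -/
def pathSet (e : Y) : Set C(unitInterval, ℝ × Y) :=
  {p | p 0 = compress 0 ∧ p 1 = compress e ∧ ∀ t, compress (expand (p t)) = p t}

lemma isClosed_pathSet (e : Y) : IsClosed (pathSet e) := by
  have h : ∀ t : unitInterval, Continuous fun p : C(unitInterval, ℝ × Y) => p t :=
    fun t => continuous_eval_const t
  have hall : IsClosed (⋂ t, {p : C(unitInterval, ℝ × Y) | compress (expand (p t)) = p t}) :=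
    isClosed_iInter fun t =>
      isClosed_eq (continuous_compress.comp (continuous_expand.comp (h t))) (h t)
  have heq : pathSet e = {p | p 0 = compress 0} ∩ ({p | p 1 = compress e} ∩
      ⋂ t, {p : C(unitInterval, ℝ × Y) | compress (expand (p t)) = p t}) := by
    ext p
    simp [pathSet]
  rw [heq]
  exact (isClosed_eq (h 0) continuous_const).inter
    ((isClosed_eq (h 1) continuous_const).inter hall)

/-- The image of a path under `compress`. -/
def compressPath (γ : C(unitInterval, Y)) : C(unitInterval, ℝ × Y) :=
  ⟨fun t => compress (γ t), continuous_compress.comp γ.continuous⟩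

lemma compressPath_mem (γ : C(unitInterval, Y)) (e : Y) (h0 : γ 0 = 0) (h1 : γ 1 = e) :
    compressPath γ ∈ pathSet e := by
  refine ⟨?_, ?_, fun t => ?_⟩ <;> simp [compressPath, h0, h1, expand_compress]

end Compress

/-! ### Deformation of a path -/

/-- A descent direction exists near each point of `A`, and `0` is admissible off `A`; the admissible
sets are convex, so a partition of unity glues these local choices. -/
lemma exists_descent_field {Y : Type*} [NormedAddCommGroup Y] [NormedSpace ℝ Y]
    (J' : Y → (Y →L[ℝ] ℝ)) (hcont : Continuous J') (γ : C(unitInterval, Y))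
    (A : Set unitInterval) (hA : IsClosed A) (hA0 : (0 : unitInterval) ∉ A)
    (hA1 : (1 : unitInterval) ∉ A) (δ : ℝ)
    (hlarge : ∀ t ∈ A, δ < ‖J' (γ t)‖ * (1 + ‖γ t‖)) :
    ∃ v : C(unitInterval, Y), v 0 = 0 ∧ v 1 = 0 ∧ (∀ t, ‖v t‖ < 1 + ‖γ t‖) ∧
      ∀ t ∈ A, J' (γ t) (v t) < -δ := by
  have hpos : ∀ t, 0 < 1 + ‖γ t‖ := fun t => by positivity
  suffices h : ∃ v : C(unitInterval, Y), ∀ t, v t ∈ {w : Y | ‖w‖ < 1 + ‖γ t‖ ∧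
      (t ∈ A → J' (γ t) w < -δ) ∧ (t = 0 ∨ t = 1 → w = 0)} by
    obtain ⟨v, hv⟩ := h
    exact ⟨v, (hv 0).2.2 (Or.inl rfl), (hv 1).2.2 (Or.inr rfl), fun t => (hv t).1,
      fun t => (hv t).2.1⟩
  refine exists_continuous_forall_mem_convex_of_local_const ?_ ?_
  · rintro t w₁ ⟨h1, h2, h3⟩ w₂ ⟨k1, k2, k3⟩ a b ha hb hab
    refine ⟨?_, fun ht => ?_, fun ht => ?_⟩
    · have := convex_ball (0 : Y) (1 + ‖γ t‖) (mem_ball_zero_iff.2 h1) (mem_ball_zero_iff.2 k1)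
        ha hb hab
      exact mem_ball_zero_iff.1 this
    · have := convex_Iio (𝕜 := ℝ) (-δ) (h2 ht) (k2 ht) ha hb hab
      simpa using this
    · simp [h3 ht, k3 ht]
  · intro t
    by_cases ht : t ∈ A
    · have hlt : δ / (1 + ‖γ t‖) < ‖J' (γ t)‖ := (div_lt_iff₀ (hpos t)).2 (hlarge t ht)
      obtain ⟨x, hx1, hx2⟩ := (J' (γ t)).exists_lt_apply_of_lt_opNorm hlt
      -- The sign of `x` is chosen so that `J' (γ t)` is negative on it.
      obtain ⟨x, hx1, hx2⟩ : ∃ x, ‖x‖ < 1 ∧ J' (γ t) x < -(δ / (1 + ‖γ t‖)) := by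
        rw [Real.norm_eq_abs, lt_abs] at hx2
        rcases hx2 with hx2 | hx2
        · exact ⟨-x, by simpa using hx1, by simpa using hx2⟩
        · exact ⟨x, hx1, by linarith⟩
      have hw1 : ‖(1 + ‖γ t‖) • x‖ < 1 + ‖γ t‖ := by
        rw [norm_smul, Real.norm_of_nonneg (hpos t).le]
        nlinarith [hpos t]
      have hw2 : J' (γ t) ((1 + ‖γ t‖) • x) < -δ := by
        rw [map_smul, smul_eq_mul]
        have := mul_lt_mul_of_pos_left hx2 (hpos t)
        rwa [mul_neg, mul_div_cancel₀ _ (hpos t).ne'] at this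
      refine ⟨(1 + ‖γ t‖) • x, ?_⟩
      have e1 : ∀ᶠ s in 𝓝 t, ‖(1 + ‖γ t‖) • x‖ < 1 + ‖γ s‖ :=
        (show Continuous fun s => 1 + ‖γ s‖ by fun_prop).continuousAt.eventually
          (lt_mem_nhds hw1)
      have e2 : ∀ᶠ s in 𝓝 t, J' (γ s) ((1 + ‖γ t‖) • x) < -δ :=
        (show Continuous fun s => J' (γ s) ((1 + ‖γ t‖) • x) by fun_prop).continuousAt.eventually
          (gt_mem_nhds hw2)
      have e3 : ∀ᶠ s in 𝓝 t, s ≠ 0 := isOpen_ne.mem_nhds (fun h => hA0 (h ▸ ht))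
      have e4 : ∀ᶠ s in 𝓝 t, s ≠ 1 := isOpen_ne.mem_nhds (fun h => hA1 (h ▸ ht))
      filter_upwards [e1, e2, e3, e4] with s h1 h2 h3 h4
      exact ⟨h1, fun _ => h2, fun h => (h.elim h3 h4).elim⟩
    · refine ⟨0, ?_⟩
      filter_upwards [hA.isOpen_compl.mem_nhds ht] with s hs
      exact ⟨by simpa using hpos s, fun h => (hs h).elim, fun _ => rfl⟩

/-- If moving `γ` along `v` lowers the maximum `M` of `J ∘ γ` at rate at most `δ`, then some
maximum point has slope at least `-δ` in direction `v`. -/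
lemma exists_slope_ge {Y : Type*} [NormedAddCommGroup Y] [NormedSpace ℝ Y]
    (J : Y → ℝ) (J' : Y → (Y →L[ℝ] ℝ)) (hderiv : ∀ y, HasFDerivAt J (J' y) y)
    (hcont : Continuous J') (γ v : C(unitInterval, Y)) (M δ : ℝ) (hM : ∀ t, J (γ t) ≤ M)
    (hstep : ∀ h : ℝ, 0 < h → h ≤ 1 / 2 → ∃ t, M - δ * h ≤ J (γ t + h • v t)) :
    ∃ t, J (γ t) = M ∧ -δ ≤ J' (γ t) (v t) := by
  have hJ : Continuous J := continuous_iff_continuousAt.2 fun y => (hderiv y).continuousAt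
  have key : ∀ n : ℕ, ∃ t : unitInterval, ∃ θ : ℝ, 0 < θ ∧ θ < 1 / ((n : ℝ) + 1) ∧
      ∃ h : ℝ, 0 < h ∧ h ≤ 1 / ((n : ℝ) + 1) ∧ M - δ * h ≤ J (γ t + h • v t) ∧
      -δ ≤ J' (γ t + θ • v t) (v t) := by
    intro n
    have hn : (0 : ℝ) < 1 / ((n : ℝ) + 1) := by positivity
    set h : ℝ := min (1 / 2) (1 / ((n : ℝ) + 1)) with hh
    have hpos : 0 < h := lt_min (by norm_num) hn
    obtain ⟨t, ht⟩ := hstep h hpos (min_le_left _ _)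
    have hd : ∀ s : ℝ, HasDerivAt (fun s : ℝ => J (γ t + s • v t))
        (J' (γ t + s • v t) (v t)) s := by
      intro s
      have h1 : HasDerivAt (fun s : ℝ => γ t + s • v t) (v t) s := by
        simpa using ((hasDerivAt_id s).smul_const (v t)).const_add (γ t)
      exact (hderiv _).comp_hasDerivAt s h1
    obtain ⟨θ, ⟨hθ0, hθ1⟩, hθ⟩ := exists_hasDerivAt_eq_slope _ _ hpos
      (fun s _ => (hd s).continuousAt.continuousWithinAt) (fun s _ => hd s)
    refine ⟨t, θ, hθ0, hθ1.trans_le (min_le_right _ _), h, hpos, min_le_right _ _, ht, ?_⟩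
    rw [hθ, sub_zero, le_div_iff₀ hpos, zero_smul, add_zero]
    have := hM t
    linarith
  choose t θ hθ0 hθ1 h hh0 hh1 hval hslope using key
  obtain ⟨s, φ, hφ, hs⟩ := CompactSpace.tendsto_subseq t
  have hz := tendsto_one_div_add_atTop_nhds_zero_nat (𝕜 := ℝ)
  have hθ : Tendsto (fun n => θ (φ n)) atTop (𝓝 0) :=
    (squeeze_zero (fun n => (hθ0 n).le) (fun n => (hθ1 n).le) hz).comp hφ.tendsto_atTop
  have hh : Tendsto (fun n => h (φ n)) atTop (𝓝 0) :=
    (squeeze_zero (fun n => (hh0 n).le) hh1 hz).comp hφ.tendsto_atTop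
  have c1 : Continuous fun q : unitInterval × ℝ => J (γ q.1 + q.2 • v q.1) := by fun_prop
  have c2 : Continuous fun q : unitInterval × ℝ => J' (γ q.1 + q.2 • v q.1) (v q.1) := by
    fun_prop
  have l1 := (c1.tendsto (s, 0)).comp (hs.prodMk_nhds hh)
  have l2 := (c2.tendsto (s, 0)).comp (hs.prodMk_nhds hθ)
  simp only [zero_smul, add_zero] at l1 l2
  have l3 : Tendsto (fun n => M - δ * h (φ n)) atTop (𝓝 (M - δ * 0)) :=
    tendsto_const_nhds.sub (hh.const_mul δ)
  refine ⟨s, le_antisymm (hM s) ?_, ?_⟩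
  · have := le_of_tendsto_of_tendsto' l3 l1 (fun n => hval (φ n))
    simpa using this
  · exact ge_of_tendsto' l2 (fun n => hslope (φ n))

/-! ### The minimax level -/

lemma bddAbove_comp {Y : Type*} [TopologicalSpace Y] {J : Y → ℝ} (hJ : Continuous J)
    (γ : C(unitInterval, Y)) : BddAbove (Set.range fun t => J (γ t)) :=
  (isCompact_range (hJ.comp γ.continuous)).bddAbove

theorem statement10 (Y : Type*) [NormedAddCommGroup Y] [NormedSpace ℝ Y] [CompleteSpace Y]
    (J : Y → ℝ) (J' : Y → (Y →L[ℝ] ℝ))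
    (hderiv : ∀ y, HasFDerivAt J (J' y) y) (hcont : Continuous J')
    (hJ0 : J 0 = 0)
    (S : Set Y) (hS : IsClosed S)
    (Y₁ Y₂ : Set Y) (hY₁ : IsOpen Y₁) (hY₂ : IsOpen Y₂)
    (hdisj : Disjoint Y₁ Y₂) (hunion : Y₁ ∪ Y₂ = Sᶜ)
    (h0 : (0 : Y) ∈ Y₁)
    (α : ℝ) (hα : 0 < α) (hSα : ∀ u ∈ S, α ≤ J u)
    (e : Y) (he : e ∈ Y₂) (hJe : J e ≤ 0) :
    let c := sInf {m : ℝ | ∃ γ : C(unitInterval, Y),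
      γ 0 = 0 ∧ γ 1 = e ∧ m = ⨆ t : unitInterval, J (γ t)}
    α ≤ c ∧ ∃ u : ℕ → Y,
      Tendsto (fun n => J (u n)) atTop (nhds c) ∧
      Tendsto (fun n => ‖J' (u n)‖ * (1 + ‖u n‖)) atTop (nhds 0) := by
  intro c
  have hJ : Continuous J := continuous_iff_continuousAt.2 fun y => (hderiv y).continuousAt
  have hlb : ∀ γ : C(unitInterval, Y), γ 0 = 0 → γ 1 = e → α ≤ ⨆ t, J (γ t) := by
    intro γ hγ0 hγ1
    obtain ⟨t, ht⟩ : ∃ t, γ t ∈ S := by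
      by_contra! hno
      have hsub : Set.range γ ⊆ Y₁ ∪ Y₂ := by
        rw [hunion]
        rintro _ ⟨t, rfl⟩
        exact hno t
      have := (isPreconnected_range γ.continuous).subset_left_of_subset_union hY₁ hY₂ hdisj hsub
        ⟨0, ⟨0, hγ0⟩, h0⟩
      exact Set.disjoint_left.1 hdisj (this ⟨1, hγ1⟩) he
    exact (hSα _ ht).trans (le_ciSup (bddAbove_comp hJ γ) t)
  have hne : {m : ℝ | ∃ γ : C(unitInterval, Y),
      γ 0 = 0 ∧ γ 1 = e ∧ m = ⨆ t : unitInterval, J (γ t)}.Nonempty :=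
    ⟨_, ⟨fun t => (t : ℝ) • e, by fun_prop⟩, by simp, by simp, rfl⟩
  have hbd : BddBelow {m : ℝ | ∃ γ : C(unitInterval, Y),
      γ 0 = 0 ∧ γ 1 = e ∧ m = ⨆ t : unitInterval, J (γ t)} :=
    ⟨α, by rintro _ ⟨γ, hγ0, hγ1, rfl⟩; exact hlb γ hγ0 hγ1⟩
  have hαc : α ≤ c := le_csInf hne (by rintro _ ⟨γ, hγ0, hγ1, rfl⟩; exact hlb γ hγ0 hγ1)
  have hc_le : ∀ γ : C(unitInterval, Y), γ 0 = 0 → γ 1 = e → c ≤ ⨆ t, J (γ t) :=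
    fun γ hγ0 hγ1 => csInf_le hbd ⟨γ, hγ0, hγ1, rfl⟩
  refine ⟨hαc, ?_⟩
  have main : ∀ ε : ℝ, 0 < ε → ∃ u, c ≤ J u ∧ J u ≤ c + ε ∧ ‖J' u‖ * (1 + ‖u‖) ≤ 2 * ε := by
    intro ε hε
    obtain ⟨_, ⟨γ₀, hγ₀0, hγ₀1, rfl⟩, hγ₀⟩ := exists_lt_of_csInf_lt hne (lt_add_of_pos_right c hε)
    have hcomplete : CompleteSpace (pathSet e) := (isClosed_pathSet e).completeSpace_coe
    let Φ : pathSet e → ℝ := fun p => ⨆ t, J (expand (p.1 t))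
    have hΦcont : Continuous Φ := by
      have hf : Continuous ↿(fun (p : pathSet e) (t : unitInterval) => J (expand (p.1 t))) := by
        refine hJ.comp (continuous_expand.comp ?_)
        exact (continuous_subtype_val.comp continuous_fst).eval continuous_snd
      have := isCompact_univ.continuous_sSup hf
      simp only [Set.image_univ] at this
      exact this
    let E : pathSet e → C(unitInterval, Y) := fun p =>
      ⟨fun t => expand (p.1 t), continuous_expand.comp p.1.continuous⟩
    have hE0 : ∀ p, E p 0 = 0 := fun p => by
      change expand (p.1 0) = 0
      rw [p.2.1, expand_compress]
    have hE1 : ∀ p, E p 1 = e := fun p => by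
      change expand (p.1 1) = e
      rw [p.2.2.1, expand_compress]
    have hcΦ : ∀ p, c ≤ Φ p := fun p => hc_le (E p) (hE0 p) (hE1 p)
    have hΦ : ∀ γ (h0 : γ 0 = 0) (h1 : γ 1 = e),
        Φ ⟨compressPath γ, compressPath_mem γ e h0 h1⟩ = ⨆ t, J (γ t) := by
      intro γ h0 h1
      change ⨆ t, J (expand (compress (γ t))) = _
      simp only [expand_compress]
    obtain ⟨p, hp1, hp2⟩ := ekeland Φ hΦcont c hcΦ ε hε
      ⟨compressPath γ₀, compressPath_mem γ₀ e hγ₀0 hγ₀1⟩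
    rw [hΦ γ₀ hγ₀0 hγ₀1] at hp1
    set γ := E p with hγ
    have hM : ∀ t, J (γ t) ≤ Φ p := fun t => le_ciSup (bddAbove_comp hJ γ) t
    have hαM : α ≤ Φ p := hαc.trans (hcΦ p)
    by_contra! hno
    have hlarge : ∀ t ∈ {t | J (γ t) = Φ p}, 2 * ε < ‖J' (γ t)‖ * (1 + ‖γ t‖) := by
      intro t ht
      have ht' : J (γ t) = Φ p := ht
      exact hno (γ t) (by rw [ht']; exact hcΦ p) (by rw [ht']; linarith)
    -- The endpoints are not maximum points, since `J ≤ 0 < α ≤ Φ p` there.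
    obtain ⟨v, hv0, hv1, hvn, hvA⟩ := exists_descent_field J' hcont γ {t | J (γ t) = Φ p}
      (isClosed_eq (hJ.comp γ.continuous) continuous_const)
      (fun h => by
        have h' : J (γ 0) = Φ p := h
        rw [hγ, hE0, hJ0] at h'
        linarith)
      (fun h => by
        have h' : J (γ 1) = Φ p := h
        rw [hγ, hE1] at h'
        linarith)
      (2 * ε) hlarge
    obtain ⟨t, ht1, ht2⟩ := exists_slope_ge J J' hderiv hcont γ v (Φ p) (2 * ε) hM (by
      intro h hh hh2
      let η : C(unitInterval, Y) := ⟨fun t => γ t + h • v t, by fun_prop⟩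
      have hη0 : η 0 = 0 := by
        change γ 0 + h • v 0 = 0
        rw [hv0, hγ, hE0]; simp
      have hη1 : η 1 = e := by
        change γ 1 + h • v 1 = e
        rw [hv1, hγ, hE1]; simp
      have hek := hp2 ⟨compressPath η, compressPath_mem η e hη0 hη1⟩
      rw [hΦ η hη0 hη1] at hek
      have hdist : dist p ⟨compressPath η, compressPath_mem η e hη0 hη1⟩ ≤ 2 * h := by
        rw [Subtype.dist_eq, ContinuousMap.dist_le (by positivity)]
        intro t
        have hpt : p.1 t = compress (γ t) := (p.2.2.2 t).symm
        rw [hpt]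
        refine dist_compress_le (γ t) (η t) h hh.le hh2 ?_
        change ‖γ t + h • v t - γ t‖ ≤ _
        rw [add_sub_cancel_left, norm_smul, Real.norm_of_nonneg hh.le]
        exact mul_le_mul_of_nonneg_left (hvn t).le hh.le
      obtain ⟨t, -, ht⟩ := isCompact_univ.exists_isMaxOn Set.univ_nonempty
        (hJ.comp η.continuous).continuousOn
      have hsup : ⨆ t, J (η t) ≤ J (η t) := ciSup_le fun s => ht (Set.mem_univ s)
      refine ⟨t, ?_⟩
      change _ ≤ J (η t)
      have := mul_le_mul_of_nonneg_left hdist hε.le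
      linarith)
    exact absurd (hvA t ht1) (not_lt.2 ht2)
  have hz := tendsto_one_div_add_atTop_nhds_zero_nat (𝕜 := ℝ)
  choose u hu1 hu2 hu3 using fun n : ℕ => main (1 / ((n : ℝ) + 1)) (by positivity)
  refine ⟨u, ?_, ?_⟩
  · refine tendsto_of_tendsto_of_tendsto_of_le_of_le tendsto_const_nhds ?_ hu1 hu2
    simpa using hz.const_add c
  · refine squeeze_zero (fun n => by positivity) hu3 ?_
    simpa using hz.const_mul 2
end
end

section
/- Fix a real number q ≥ 2. There exists a constant C > 0 such that for every integer n ≥ 3 with (ln n)^{q/2} < n, the Moser-type function ω_n satisfies ∫_{ℝ²} ω_n(x)² dx ≤ C/ln n. -/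
/-!
Write `L = log n` and `r₀ = L ^ (q/2) / n < 1`. The constant value of `ω_n` on the inner disc is
`log (1/r₀) / √(2πL)`, so for `x ≠ 0` the function `ω_n` is dominated by its logarithmic branch:
`0 ≤ ω_n x ≤ log (1/‖x‖) / √(2πL)` on the unit disc, and `ω_n = 0` outside
(`omegaM_sq_le`). Since `r (log r)² ≤ 4` on `(0, 1]`, this gives `ω_n² ≤ (2πL)⁻¹ · 4/‖x‖` on the
unit disc, and `1/‖x‖` is integrable there in dimension two (`integrable_majorant`).
-/

noncomputable section

open MeasureTheory Real

/-- The Moser-type function ω_n. -/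
def omegaM (q : ℝ) (n : ℕ) (x : R2) : ℝ :=
  if ‖x‖ ≤ (Real.log n) ^ (q/2) / n then
    (1 / Real.sqrt (2*π)) *
      (Real.sqrt (Real.log n) - q * Real.log (Real.log n) / (2 * Real.sqrt (Real.log n)))
  else if ‖x‖ ≤ 1 then Real.log (1/‖x‖) / Real.sqrt (2*π*Real.log n)
  else 0

/-- Radial profile `4/r` on `(0, 1]`, zero elsewhere; it dominates `(log r)²` there. -/
def majorant : ℝ → ℝ := (Set.Ioc 0 1).indicator (fun r => 4 / r)

lemma majorant_nonneg (r : ℝ) : 0 ≤ majorant r :=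
  Set.indicator_nonneg (fun _ hr => div_nonneg (by norm_num) hr.1.le) r

lemma integrable_majorant : Integrable (fun x : R2 => majorant ‖x‖) := by
  rw [integrable_fun_norm_addHaar]
  -- The polar weight `r` cancels the singularity of `4/r`.
  have h : (fun y : ℝ => y ^ (Module.finrank ℝ R2 - 1) • majorant y)
      = (Set.Ioc (0:ℝ) 1).indicator (fun _ => (4:ℝ)) := by
    funext y
    by_cases hy : y ∈ Set.Ioc (0:ℝ) 1
    · have := hy.1.ne'
      simp [majorant, hy]
      field_simp
    · simp [majorant, hy]
  rw [h]
  refine Integrable.integrableOn ?_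
  rw [integrable_indicator_iff measurableSet_Ioc]
  exact integrableOn_const (by simp)

lemma log_sq_le {r : ℝ} (h0 : 0 < r) (h1 : r ≤ 1) : log r ^ 2 ≤ 4 / r := by
  have h := abs_log_mul_self_rpow_lt r (1/2) h0 h1 (by norm_num)
  have h2 : |log r * r ^ (1/2 : ℝ)| ^ 2 ≤ 2 ^ 2 :=
    pow_le_pow_left₀ (abs_nonneg _) (by norm_num at h ⊢; exact h.le) 2
  rw [sq_abs, mul_pow, ← rpow_natCast (r ^ (1/2 : ℝ)), ← rpow_mul h0.le] at h2
  norm_num at h2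
  rw [le_div_iff₀ h0]
  exact h2

/-- The inner plateau of `ω_n` equals the logarithmic branch at `r₀ = (log n)^(q/2) / n`. -/
lemma inner_value (q : ℝ) {n : ℕ} (hL : 0 < log n) (hn : (0:ℝ) < n) :
    (1 / √(2*π)) * (√(log n) - q * log (log n) / (2 * √(log n)))
      = -log (log n ^ (q/2) / n) / √(2*π*log n) := by
  rw [log_div (rpow_pos_of_pos hL _).ne' hn.ne', log_rpow hL,
    sqrt_mul (by positivity) (log n)]
  have hs : 0 < √(log n) := sqrt_pos.2 hL
  have hp : 0 < √(2*π) := sqrt_pos.2 (by positivity)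
  field_simp
  rw [sq_sqrt hL.le]
  ring

lemma omegaM_sq_le (q : ℝ) {n : ℕ} (hL : 0 < log n) (hn : (0:ℝ) < n)
    (hr : log n ^ (q/2) < n) {x : R2} (hx : x ≠ 0) :
    omegaM q n x ^ 2 ≤ majorant ‖x‖ / (2*π*log n) := by
  have hx0 : 0 < ‖x‖ := norm_pos_iff.2 hx
  have hD : 0 < 2*π*log n := by positivity
  have hr1 : log n ^ (q/2) / n < 1 := (div_lt_one hn).2 hr
  have key : ‖x‖ ≤ 1 → log ‖x‖ ^ 2 / (2*π*log n) ≤ majorant ‖x‖ / (2*π*log n) := by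
    intro h1
    rw [majorant, Set.indicator_of_mem (show ‖x‖ ∈ Set.Ioc (0:ℝ) 1 from ⟨hx0, h1⟩)]
    gcongr
    exact log_sq_le hx0 h1
  unfold omegaM
  split_ifs with h h1
  · rw [inner_value q hL hn, div_pow, sq_sqrt hD.le]
    refine le_trans ?_ (key (h.trans hr1.le))
    have a := log_le_log hx0 h
    have b : log (log n ^ (q/2) / n) ≤ 0 := log_nonpos (by positivity) hr1.le
    gcongr ?_ / _
    nlinarith
  · rw [one_div, log_inv, div_pow, sq_sqrt hD.le, neg_sq]
    exact key h1
  · simpa using div_nonneg (majorant_nonneg _) hD.le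

theorem statement12 (q : ℝ) (hq : 2 ≤ q) :
    ∃ C > 0, ∀ n : ℕ, 3 ≤ n → (Real.log n) ^ (q/2) < n →
      ∫ x, (omegaM q n x)^2 ≤ C / Real.log n := by
  have hI : 0 ≤ ∫ x : R2, majorant ‖x‖ := integral_nonneg fun x => majorant_nonneg _
  refine ⟨(∫ x : R2, majorant ‖x‖) / (2*π) + 1, by positivity, fun n hn hr => ?_⟩
  have hn1 : (1:ℝ) < n := by exact_mod_cast (by omega : 1 < n)
  have hL : 0 < log n := log_pos hn1
  calc ∫ x, (omegaM q n x)^2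
      ≤ ∫ x : R2, majorant ‖x‖ / (2*π*log n) := by
        refine integral_mono_of_nonneg (Filter.Eventually.of_forall fun x => sq_nonneg _)
          (integrable_majorant.div_const _) ?_
        filter_upwards [Measure.ae_ne volume (0 : R2)] with x hx
        exact omegaM_sq_le q hL (by linarith) hr hx
    _ = (∫ x : R2, majorant ‖x‖) / (2*π) / log n := by
        rw [integral_div, div_div]
    _ ≤ _ := by gcongr; linarith
end
end

section
/- Let p ≥ 1 be a real number and let h : ℝ → ℝ be continuous, and set H(t) := ∫₀^t h(s) ds. Assume the map s ↦ h(s)/|s|^{2p−1} is nondecreasing on (−∞,0) and nondecreasing on (0,∞). Then for every τ ∈ ℝ and every t ≥ 0, H(τ) − H(tτ) ≤ ((1 − t^{2p})/(2p)) h(τ)τ. -/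
noncomputable section

open MeasureTheory Real

/-!
Since `H τ - H (t τ) = ∫ s in t..1, h (s τ) τ` and `∫ s in t..1, s ^ (2p-1) = (1 - t ^ (2p)) / (2p)`,
it suffices to compare `h (s τ) τ` with `s ^ (2p-1) h τ τ` pointwise. The monotonicity hypotheses
say that `s ↦ h (s τ) τ / s ^ (2p-1)` is nondecreasing on `(0, ∞)` for either sign of `τ`
(`ray_mono`), so the first is at most the second for `s ≤ 1` and at least the second for `s ≥ 1`;
in the latter case the orientation of the integral reverses the inequality again.
-/

/-- Monotonicity of `s ↦ h (s τ) τ / s ^ q` on `(0, ∞)`, with denominators cleared. For `τ < 0` both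
the order of the arguments and the sign of the factor `τ` are reversed. -/
theorem ray_mono (q : ℝ) (h : ℝ → ℝ)
    (hmono₁ : MonotoneOn (fun s => h s / |s| ^ q) (Set.Iio (0:ℝ)))
    (hmono₂ : MonotoneOn (fun s => h s / |s| ^ q) (Set.Ioi (0:ℝ)))
    (τ a b : ℝ) (ha : 0 < a) (hab : a ≤ b) :
    h (a * τ) * τ * b ^ q ≤ h (b * τ) * τ * a ^ q := by
  have hb : 0 < b := ha.trans_le hab
  have hA : 0 < a ^ q := rpow_pos_of_pos ha q
  have hB : 0 < b ^ q := rpow_pos_of_pos hb q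
  rcases lt_trichotomy τ 0 with hτ | rfl | hτ
  · have hT : 0 < |τ| ^ q := rpow_pos_of_pos (abs_pos.2 hτ.ne) q
    have key := hmono₁ (Set.mem_Iio.2 (mul_neg_of_pos_of_neg hb hτ))
      (Set.mem_Iio.2 (mul_neg_of_pos_of_neg ha hτ)) (mul_le_mul_of_nonpos_right hab hτ.le)
    simp only [abs_mul, abs_of_pos ha, abs_of_pos hb, mul_rpow ha.le (abs_nonneg τ),
      mul_rpow hb.le (abs_nonneg τ)] at key
    rw [div_le_div_iff₀ (by positivity) (by positivity)] at key
    have key' : h (b * τ) * a ^ q ≤ h (a * τ) * b ^ q := by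
      refine le_of_mul_le_mul_right ?_ hT
      linarith
    nlinarith [mul_le_mul_of_nonpos_right key' hτ.le]
  · simp
  · have hT : 0 < |τ| ^ q := rpow_pos_of_pos (abs_pos.2 hτ.ne') q
    have key := hmono₂ (Set.mem_Ioi.2 (mul_pos ha hτ))
      (Set.mem_Ioi.2 (mul_pos hb hτ)) (mul_le_mul_of_nonneg_right hab hτ.le)
    simp only [abs_mul, abs_of_pos ha, abs_of_pos hb, mul_rpow ha.le (abs_nonneg τ),
      mul_rpow hb.le (abs_nonneg τ)] at key
    rw [div_le_div_iff₀ (by positivity) (by positivity)] at key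
    have key' : h (a * τ) * b ^ q ≤ h (b * τ) * a ^ q := by
      refine le_of_mul_le_mul_right ?_ hT
      linarith
    nlinarith [mul_le_mul_of_nonneg_right key' hτ.le]

theorem statement13 (p : ℝ) (hp : 1 ≤ p) (h : ℝ → ℝ) (hc : Continuous h)
    (H : ℝ → ℝ) (hH : ∀ t, H t = ∫ s in (0:ℝ)..t, h s)
    (hmono₁ : MonotoneOn (fun s => h s / |s| ^ (2*p - 1)) (Set.Iio (0:ℝ)))
    (hmono₂ : MonotoneOn (fun s => h s / |s| ^ (2*p - 1)) (Set.Ioi (0:ℝ))) :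
    ∀ τ : ℝ, ∀ t : ℝ, 0 ≤ t →
      H τ - H (t * τ) ≤ ((1 - t ^ (2*p)) / (2*p)) * (h τ * τ) := by
  intro τ t ht
  have hL : H τ - H (t * τ) = ∫ s in t..1, h (s * τ) * τ := by
    rw [hH, hH, intervalIntegral.integral_interval_sub_left (hc.intervalIntegrable _ _)
      (hc.intervalIntegrable _ _), intervalIntegral.integral_mul_const, mul_comm (∫ s in t..1, h (s * τ)) τ,
      intervalIntegral.mul_integral_comp_mul_right, one_mul]
  have hR : ((1 - t ^ (2*p)) / (2*p)) * (h τ * τ)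
      = ∫ s in t..1, s ^ (2*p - 1) * (h τ * τ) := by
    rw [intervalIntegral.integral_mul_const, integral_rpow (Or.inl (by linarith)),
      sub_add_cancel, one_rpow]
  have hi₁ : ∀ a b : ℝ, IntervalIntegrable (fun s => h (s * τ) * τ) volume a b := fun a b =>
    Continuous.intervalIntegrable (by fun_prop) a b
  have hi₂ : ∀ a b : ℝ,
      IntervalIntegrable (fun s : ℝ => s ^ (2*p - 1) * (h τ * τ)) volume a b := fun a b =>
    (intervalIntegral.intervalIntegrable_rpow' (by linarith)).mul_const _
  rw [hL, hR]
  rcases le_total t 1 with h1 | h1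
  · -- Comparing on the open interval avoids the endpoint `s = 0`.
    refine intervalIntegral.integral_mono_on_of_le_Ioo h1 (hi₁ _ _) (hi₂ _ _) fun s hs => ?_
    have := ray_mono _ h hmono₁ hmono₂ τ s 1 (ht.trans_lt hs.1) hs.2.le
    rw [one_rpow, one_mul] at this
    linarith
  · rw [intervalIntegral.integral_symm 1 t, intervalIntegral.integral_symm 1 t, neg_le_neg_iff]
    refine intervalIntegral.integral_mono_on_of_le_Ioo h1 (hi₂ _ _) (hi₁ _ _) fun s hs => ?_
    have := ray_mono _ h hmono₁ hmono₂ τ 1 s one_pos hs.1.le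
    rw [one_rpow, one_mul] at this
    linarith
end
end

section
/- Let p ≥ 1 be a real number and let h : ℝ → ℝ be continuous, and set H(t) := ∫₀^t h(s) ds. Assume the map s ↦ h(s)/|s|^{2p−1} is nondecreasing on (−∞,0) and nondecreasing on (0,∞). Then for every t ∈ ℝ, H(t) ≤ h(t)t/(2p). -/
noncomputable section

open MeasureTheory Real

/-!
For `t > 0`, monotonicity of `h(s)/s^{2p-1}` gives `h(s) ≤ (h(t)/t^{2p-1}) s^{2p-1}` on `(0,t)`;
integrating over `(0,t)` yields `H(t) ≤ (h(t)/t^{2p-1}) t^{2p}/(2p) = h(t)t/(2p)`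
(`integral_le_of_pos`). The case `t < 0` follows by applying this to the reflected function
`s ↦ -h(-s)`, which inherits the monotonicity, and `t = 0` is trivial.
-/

lemma integral_le_of_pos (p : ℝ) (hp : 1 ≤ p) (h : ℝ → ℝ) (hc : Continuous h)
    (hmono : MonotoneOn (fun s => h s / |s| ^ (2*p - 1)) (Set.Ioi (0:ℝ)))
    (t : ℝ) (ht : 0 < t) : ∫ s in (0:ℝ)..t, h s ≤ h t * t / (2*p) := by
  have hle : ∫ s in (0:ℝ)..t, h s ≤ ∫ s in (0:ℝ)..t, h t / t ^ (2*p - 1) * s ^ (2*p - 1) := by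
    apply intervalIntegral.integral_mono_on_of_le_Ioo ht.le (hc.intervalIntegrable _ _)
    · exact (intervalIntegral.intervalIntegrable_rpow' (by linarith)).const_mul _
    · intro s hs
      have hm := hmono (Set.mem_Ioi.2 hs.1) (Set.mem_Ioi.2 ht) hs.2.le
      simp only [abs_of_pos hs.1, abs_of_pos ht] at hm
      exact (div_le_iff₀ (rpow_pos_of_pos hs.1 _)).1 hm
  refine hle.trans_eq ?_
  rw [intervalIntegral.integral_const_mul, integral_rpow (Or.inl (by linarith)),
    zero_rpow (by linarith), rpow_add_one ht.ne']
  have hpow := (rpow_pos_of_pos ht (2*p - 1)).ne'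
  rw [sub_add_cancel, sub_zero]
  field_simp

theorem statement14 (p : ℝ) (hp : 1 ≤ p) (h : ℝ → ℝ) (hc : Continuous h)
    (H : ℝ → ℝ) (hH : ∀ t, H t = ∫ s in (0:ℝ)..t, h s)
    (hmono₁ : MonotoneOn (fun s => h s / |s| ^ (2*p - 1)) (Set.Iio (0:ℝ)))
    (hmono₂ : MonotoneOn (fun s => h s / |s| ^ (2*p - 1)) (Set.Ioi (0:ℝ))) :
    ∀ t : ℝ, H t ≤ h t * t / (2*p) := by
  intro t
  rw [hH]
  rcases lt_trichotomy t 0 with ht | rfl | ht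
  · have hrefl := integral_le_of_pos p hp (fun s => -h (-s)) (by fun_prop) (by
      intro a ha b hb hab
      have hm := hmono₁ (Set.mem_Iio.2 (neg_lt_zero.2 hb)) (Set.mem_Iio.2 (neg_lt_zero.2 ha))
        (neg_le_neg hab)
      simp only [abs_neg] at hm
      simp only [neg_div]
      exact neg_le_neg hm) (-t) (by linarith)
    rw [intervalIntegral.integral_neg, intervalIntegral.integral_comp_neg, neg_neg, neg_zero,
      ← intervalIntegral.integral_symm, neg_mul_neg] at hrefl
    exact hrefl
  · simp
  · exact integral_le_of_pos p hp h hc hmono₂ t ht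
end
end

section
/- Let α₀ > 0 and let f : ℝ² × ℝ → ℝ be continuous such that: for every A > 0, sup{|f(x,s)| : x ∈ ℝ², |s| ≤ A} < ∞; for every α > α₀, sup_{x∈ℝ²}|f(x,t)|e^{−αt²} → 0 as |t| → ∞; and sup_{x∈ℝ²}|f(x,t)|/|t| → 0 as t → 0. Set F(x,t) := ∫₀^t f(x,s) ds. Then for every ε > 0 there exists C_ε > 0 such that |F(x,t)| ≤ ε t² + C_ε (e^{3α₀t²/2} − 1)|t|³ for all (x,t) ∈ ℝ² × ℝ. -/
/-!
Write `a = 3α₀/2 > α₀`. The growth condition for the exponent `a`, with boundedness on compact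
`t`-intervals, gives `|f(x,s)| ≤ M exp(a s²)` for all `x, s`. Choose `δ` with `|f(x,s)| ≤ ε|s|`
for `0 < |s| ≤ δ`. If `|t| ≤ δ`, integration gives `|F(x,t)| ≤ ε t²`. If `|t| ≥ δ`, it gives
`|F(x,t)| ≤ M exp(a t²) |t|`, where `|t| ≤ |t|³/δ²` and, with `E = exp(a δ²)`,
`exp(a t²) ≤ E/(E-1) · (exp(a t²) - 1)`. So `C = M · E/(E-1) / δ²` works.
-/

noncomputable section

open MeasureTheory Real

def Fprim (f : R2 × ℝ → ℝ) (x : R2) (t : ℝ) : ℝ := ∫ s in (0:ℝ)..t, f (x, s)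

/-- The variable of integration in `∫ s in 0..t` satisfies `|s| ≤ |t|`. -/
lemma abs_le_of_mem_uIoc {s t : ℝ} (hs : s ∈ Set.uIoc 0 t) : |s| ≤ |t| := by
  simpa using Set.abs_sub_left_of_mem_uIcc (Set.uIoc_subset_uIcc hs)

theorem statement16 (α₀ : ℝ) (hα₀ : 0 < α₀) (f : R2 × ℝ → ℝ) (hf : Continuous f)
    (hbdd : ∀ A > 0, ∃ C, ∀ x s, |s| ≤ A → |f (x, s)| ≤ C)
    (hgrowth : ∀ α > α₀, ∀ ε > 0, ∃ T, ∀ x t, T ≤ |t| →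
      |f (x, t)| * Real.exp (-α * t^2) ≤ ε)
    (hzero : ∀ ε > 0, ∃ δ > 0, ∀ x t, t ≠ 0 → |t| ≤ δ → |f (x, t)| ≤ ε * |t|) :
    ∀ ε > 0, ∃ C > 0, ∀ x t,
      |Fprim f x t| ≤ ε * t^2 + C * (Real.exp (3 * α₀ * t^2 / 2) - 1) * |t|^3 := by
  intro ε hε
  have ha : 0 < 3 * α₀ / 2 := by positivity
  obtain ⟨M, hM, hfM⟩ : ∃ M > 0, ∀ x s, |f (x, s)| ≤ M * exp (3 * α₀ / 2 * s ^ 2) := by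
    obtain ⟨T, hT⟩ := hgrowth (3 * α₀ / 2) (by linarith) 1 one_pos
    obtain ⟨B, hB⟩ := hbdd (max T 1) (by positivity)
    refine ⟨max B 1, by positivity, fun x s => ?_⟩
    have h1 : 1 ≤ exp (3 * α₀ / 2 * s ^ 2) := one_le_exp (by positivity)
    rcases le_total |s| (max T 1) with hs | hs
    · exact ((hB x s hs).trans (le_max_left B 1)).trans
        (le_mul_of_one_le_right (by positivity) h1)
    · have h := hT x s ((le_max_left T 1).trans hs)
      rw [neg_mul, exp_neg, mul_inv_le_iff₀ (exp_pos _)] at h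
      exact h.trans (mul_le_mul_of_nonneg_right (le_max_right B 1) (exp_pos _).le)
  obtain ⟨δ, hδ, hfδ⟩ := hzero ε hε
  set E := exp (3 * α₀ / 2 * δ ^ 2) with hE
  have hE1 : 0 < E - 1 := sub_pos.2 (one_lt_exp_iff.2 (by positivity))
  have hE0 : 0 < E := exp_pos _
  refine ⟨M * (E / (E - 1)) / δ ^ 2, by positivity, fun x t => ?_⟩
  rw [show 3 * α₀ * t ^ 2 / 2 = 3 * α₀ / 2 * t ^ 2 by ring]
  have hX1 : 0 ≤ exp (3 * α₀ / 2 * t ^ 2) - 1 := sub_nonneg.2 (one_le_exp (by positivity))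
  rcases le_total |t| δ with ht | ht
  · have hF : |Fprim f x t| ≤ ε * t ^ 2 := by
      -- The bound at the origin says nothing about `s = 0`, a null set.
      have h : ‖∫ s in (0 : ℝ)..t, f (x, s)‖ ≤ (ε * |t|) * |t - 0| := by
        refine intervalIntegral.norm_integral_le_of_norm_le_const_ae ?_
        filter_upwards [Measure.ae_ne volume (0 : ℝ)] with s hs0 hs
        have hst : |s| ≤ |t| := abs_le_of_mem_uIoc hs
        exact (hfδ x s hs0 (hst.trans ht)).trans (mul_le_mul_of_nonneg_left hst hε.le)
      rwa [sub_zero, mul_assoc, abs_mul_abs_self, ← pow_two] at h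
    exact hF.trans (le_add_of_nonneg_right (by positivity))
  · have hF : |Fprim f x t| ≤ M * exp (3 * α₀ / 2 * t ^ 2) * |t| := by
      have h : ‖∫ s in (0 : ℝ)..t, f (x, s)‖ ≤ (M * exp (3 * α₀ / 2 * t ^ 2)) * |t - 0| := by
        refine intervalIntegral.norm_integral_le_of_norm_le_const fun s hs => ?_
        have hst : s ^ 2 ≤ t ^ 2 := sq_le_sq.2 (abs_le_of_mem_uIoc hs)
        refine (hfM x s).trans ?_
        gcongr
      rwa [sub_zero] at h
    have hEX : E ≤ exp (3 * α₀ / 2 * t ^ 2) := by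
      rw [hE, ← sq_abs t]
      gcongr
    set X := exp (3 * α₀ / 2 * t ^ 2)
    -- The function `X / (X - 1)` is decreasing on `(1, ∞)`, and `E ≤ X`.
    have hXK : X ≤ E / (E - 1) * (X - 1) := by
      rw [div_mul_eq_mul_div, le_div_iff₀ hE1]
      nlinarith
    have ht3 : |t| ≤ |t| ^ 3 / δ ^ 2 := by
      rw [le_div_iff₀ (by positivity), pow_succ' |t| 2]
      gcongr
    calc |Fprim f x t| ≤ M * X * |t| := hF
      _ ≤ M * (E / (E - 1) * (X - 1)) * (|t| ^ 3 / δ ^ 2) := by gcongr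
      _ = M * (E / (E - 1)) / δ ^ 2 * (X - 1) * |t| ^ 3 := by ring
      _ ≤ _ := le_add_of_nonneg_left (by positivity)
end
end

section
/- Let α₀ > 0 and t₀ > 0, let F : ℝ² × ℝ → [0,∞) be a Borel function with F(x,t) ≥ e^{α₀ t²/2} for all x ∈ ℝ² and all |t| ≥ t₀, and let ω : ℝ² → ℝ be measurable such that for some δ > 0 the set {x ∈ ℝ² : |ω(x)| ≥ δ} has positive (possibly infinite) Lebesgue measure. Then for every A ∈ ℝ and B ∈ ℝ there exists T > 0 such that for all t ≥ T, ∫_{ℝ²} F(x, tω(x)) dx ≥ A t² + B, where the integral is taken in [0,∞]. In particular, ∫_{ℝ²}F(x,tω)dx − At² → +∞ as t → +∞. -/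
/-!
On `S = {δ ≤ |ω|}` and for `t ≥ t₀ / δ` the integrand is at least `exp (c t²)` with
`c = α₀ δ² / 2`, so the integral is at least `exp (c t²) * volume S ≥ m exp (c t²)`, where `m` is
a positive real at most the (possibly infinite) measure of `S`. Since `exp y ≥ y² / 2` for `y ≥ 0`,
this dominates every affine function of `t²`.
-/

noncomputable section

open MeasureTheory Real

/-- Exponential growth beats affine growth, with a threshold stated in terms of `t`. -/
lemma affine_le_mul_exp_sq (A B m c t : ℝ) (hm : 0 < m) (hc : 0 < c) (ht1 : 1 ≤ t)
    (ht : 2 * (|A| + |B|) / (m * c ^ 2) ≤ t) :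
    A * t ^ 2 + B ≤ m * Real.exp (c * t ^ 2) := by
  have hs1 : 1 ≤ t ^ 2 := one_le_pow₀ ht1
  have hts : t ≤ t ^ 2 := by nlinarith
  generalize t ^ 2 = s at hs1 hts ⊢
  have hs : 2 * (|A| + |B|) ≤ s * (m * c ^ 2) :=
    (div_le_iff₀ (by positivity)).1 (ht.trans hts)
  have hexp : (c * s) ^ 2 / 2 ≤ Real.exp (c * s) := by
    have h0 : 0 ≤ c * s := by positivity
    have := Real.quadratic_le_exp_of_nonneg h0
    linarith
  calc A * s + B ≤ |A| * s + |B| * s := by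
        have h1 : A * s ≤ |A| * s := by gcongr; exact le_abs_self A
        have h2 : |B| * 1 ≤ |B| * s := by gcongr
        linarith [le_abs_self B]
    _ ≤ m * ((c * s) ^ 2 / 2) := by
        have := mul_le_mul_of_nonneg_right hs (by positivity : 0 ≤ s)
        linarith
    _ ≤ m * Real.exp (c * s) := by gcongr

theorem statement18 (α₀ t₀ : ℝ) (hα₀ : 0 < α₀) (ht₀ : 0 < t₀)
    (F : R2 × ℝ → ℝ) (hF : Measurable F) (hFnonneg : ∀ x t, 0 ≤ F (x, t))
    (hFlower : ∀ x : R2, ∀ t : ℝ, t₀ ≤ |t| → Real.exp (α₀ * t^2 / 2) ≤ F (x, t))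
    (ω : R2 → ℝ) (hω : Measurable ω)
    (δ : ℝ) (hδ : 0 < δ) (hpos : 0 < volume {x : R2 | δ ≤ |ω x|}) :
    ∀ A B : ℝ, ∃ T > 0, ∀ t : ℝ, T ≤ t →
      ENNReal.ofReal (A * t^2 + B) ≤ ∫⁻ x, ENNReal.ofReal (F (x, t * ω x)) := by
  intro A B
  set S : Set R2 := {x : R2 | δ ≤ |ω x|} with hS
  have hSm : MeasurableSet S := measurableSet_le measurable_const hω.abs
  -- `volume S` may be infinite, so it is replaced by a positive real lower bound.
  obtain ⟨m, hm, hmS⟩ : ∃ m : ℝ, 0 < m ∧ ENNReal.ofReal m ≤ volume S := by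
    refine ⟨(min (volume S) 1).toReal, ENNReal.toReal_pos ?_ ?_, ?_⟩
    · exact (lt_min hpos one_pos).ne'
    · exact ne_top_of_le_ne_top ENNReal.one_ne_top (min_le_right _ _)
    · exact ENNReal.ofReal_toReal_le.trans (min_le_left _ _)
  have hc : 0 < α₀ * δ ^ 2 / 2 := by positivity
  refine ⟨max 1 (max (t₀ / δ) (2 * (|A| + |B|) / (m * (α₀ * δ ^ 2 / 2) ^ 2))),
    lt_max_of_lt_left one_pos, fun t ht => ?_⟩
  obtain ⟨ht1, ht⟩ := max_le_iff.1 ht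
  obtain ⟨ht2, ht3⟩ := max_le_iff.1 ht
  have htδ : t₀ ≤ t * δ := (div_le_iff₀ hδ).1 ht2
  have hlow : ∀ x ∈ S, Real.exp (α₀ * δ ^ 2 / 2 * t ^ 2) ≤ F (x, t * ω x) := by
    intro x hx
    have hx' : δ ≤ |ω x| := hx
    have habs : t * δ ≤ |t * ω x| := by
      rw [abs_mul, abs_of_pos (by linarith : 0 < t)]
      gcongr
    have hsq : (t * δ) ^ 2 ≤ (t * ω x) ^ 2 := by
      rw [← sq_abs (t * ω x)]
      gcongr
    refine le_trans (Real.exp_le_exp.2 ?_) (hFlower x (t * ω x) (htδ.trans habs))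
    have := mul_le_mul_of_nonneg_left hsq hα₀.le
    linarith
  calc ENNReal.ofReal (A * t ^ 2 + B)
      ≤ ENNReal.ofReal (Real.exp (α₀ * δ ^ 2 / 2 * t ^ 2)) * ENNReal.ofReal m := by
        rw [← ENNReal.ofReal_mul (Real.exp_pos _).le, mul_comm (Real.exp _) m]
        exact ENNReal.ofReal_le_ofReal (affine_le_mul_exp_sq A B m _ t hm hc ht1 ht3)
    _ ≤ ENNReal.ofReal (Real.exp (α₀ * δ ^ 2 / 2 * t ^ 2)) * volume S := by gcongr
    _ = ∫⁻ _ in S, ENNReal.ofReal (Real.exp (α₀ * δ ^ 2 / 2 * t ^ 2)) :=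
        (setLIntegral_const _ _).symm
    _ ≤ ∫⁻ x in S, ENNReal.ofReal (F (x, t * ω x)) :=
        setLIntegral_mono' hSm fun x hx => ENNReal.ofReal_le_ofReal (hlow x hx)
    _ ≤ ∫⁻ x, ENNReal.ofReal (F (x, t * ω x)) := setLIntegral_le_lintegral _ _
end
end
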